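/- arXiv:2208.05291 — 3 statements merged into one kernel-verified Lean document; each statement's English description precedes it below -/
import Mathlib

section
/- Let 1 ≤ k ≤ n and let S ∈ ℝ^{2n×2k} satisfy Sᵀ J_{2n} S = J_{2k}. Set 𝒥 = [[0, J_{2n}], [−J_{2n}, 0]] ∈ ℝ^{4n×4n} and 𝒳 = (1/√2) [[S, S J_{2k}ᵀ], [S J_{2k}ᵀ, S]] ∈ ℝ^{4n×4k}. Then 𝒳ᵀ 𝒥 𝒳 = diag(I_{2k}, −I_{2k}). -/
/-!
Write `J = J_{2n}`, `K = J_{2k}` and `T = S Kᵀ`. Block multiplication gives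
`2 𝒳ᵀ 𝒥 𝒳 = [[SᵀJT - TᵀJS, SᵀJS - TᵀJT], [TᵀJT - SᵀJS, TᵀJS - SᵀJT]]`.
Since `SᵀJS = K`, `Kᵀ = -K` and `K² = -1`, one has `SᵀJT = 1`, `TᵀJS = -1` and
`TᵀJT = K`, so the right-hand side is `diag(2, -2)`.
-/

open Matrix

/-- The standard symplectic matrix `J_{2m}`. -/
noncomputable def symplJ (m : ℕ) : Matrix (Fin m ⊕ Fin m) (Fin m ⊕ Fin m) ℝ :=
  Matrix.fromBlocks 0 1 (-1) 0

/-- `𝒥 = [[0, J_{2n}], [−J_{2n}, 0]] ∈ ℝ^{4n×4n}`. -/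
noncomputable def bigJ (n : ℕ) :
    Matrix ((Fin n ⊕ Fin n) ⊕ (Fin n ⊕ Fin n)) ((Fin n ⊕ Fin n) ⊕ (Fin n ⊕ Fin n)) ℝ :=
  Matrix.fromBlocks 0 (symplJ n) (-(symplJ n)) 0

/-- For `S ∈ Sp(2k, 2n)` and `𝒳 = (1/√2) [[S, S J_{2k}ᵀ], [S J_{2k}ᵀ, S]]`, one has
`𝒳ᵀ 𝒥 𝒳 = diag(I_{2k}, −I_{2k})`. -/
theorem bigX_J_normalization
    {n k : ℕ} (hk1 : 1 ≤ k) (hkn : k ≤ n)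
    (S : Matrix (Fin n ⊕ Fin n) (Fin k ⊕ Fin k) ℝ)
    (hS : Sᵀ * symplJ n * S = symplJ k)
    (X : Matrix ((Fin n ⊕ Fin n) ⊕ (Fin n ⊕ Fin n)) ((Fin k ⊕ Fin k) ⊕ (Fin k ⊕ Fin k)) ℝ)
    (hX : X = (Real.sqrt 2)⁻¹ •
        Matrix.fromBlocks S (S * (symplJ k)ᵀ) (S * (symplJ k)ᵀ) S) :
    Xᵀ * bigJ n * X = Matrix.fromBlocks 1 0 0 (-1) := by
  have hT : (symplJ k)ᵀ = -symplJ k := by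
    simp [symplJ, fromBlocks_transpose, fromBlocks_neg]
  have hK : symplJ k * symplJ k = -1 := by
    rw [symplJ, fromBlocks_multiply, ← fromBlocks_one, fromBlocks_neg]
    simp
  have hc : (Real.sqrt 2)⁻¹ * (Real.sqrt 2)⁻¹ = (1 / 2 : ℝ) := by
    rw [← mul_inv, Real.mul_self_sqrt (by norm_num)]
    norm_num
  have hS' : Sᵀ * (symplJ n * S) = symplJ k := by rw [← Matrix.mul_assoc, hS]
  -- In `key` products are associated to the right, so `SᵀJS = K` is also needed with a
  -- trailing factor.
  have hSR (M : Matrix (Fin k ⊕ Fin k) (Fin k ⊕ Fin k) ℝ) :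
      Sᵀ * (symplJ n * (S * M)) = symplJ k * M := by
    rw [← hS']
    simp only [Matrix.mul_assoc]
  have key : (fromBlocks S (S * (symplJ k)ᵀ) (S * (symplJ k)ᵀ) S)ᵀ * bigJ n *
      fromBlocks S (S * (symplJ k)ᵀ) (S * (symplJ k)ᵀ) S
      = (2 : ℝ) • fromBlocks 1 0 0 (-1) := by
    rw [bigJ, fromBlocks_transpose, fromBlocks_multiply, fromBlocks_multiply, fromBlocks_smul]
    simp [hT, Matrix.mul_assoc, hS', hSR, hK, two_smul]
  rw [hX, transpose_smul, smul_mul, smul_mul, Matrix.mul_smul, key, smul_smul, smul_smul, hc]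
  norm_num
end

section
/- Let A be a 2n×2n real symmetric positive-semidefinite matrix admitting a Williamson diagonal form: there are a symplectic matrix S ∈ ℝ^{2n×2n} and 0 ≤ d_1 ≤ ⋯ ≤ d_n such that Sᵀ A S = [[D, 0], [0, D]] with D = diag(d_1, …, d_n). Then for every k with 1 ≤ k ≤ n, min over X ∈ Sp(2k, 2n) of tr(Xᵀ A X) exists and equals 2 (d_1 + ⋯ + d_k); i.e., 2∑_{j=1}^k d_j is the least element of the set {tr(Xᵀ A X) : X ∈ ℝ^{2n×2k}, Xᵀ J_{2n} X = J_{2k}}. -/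
/-!
Since `S` is symplectic, the substitution `X = S * Y` reduces the problem to `A = D ⊕ D`, with `Y`
again in `Sp(2k, 2n)`. The minimum is attained when the columns of `Y` are the standard basis
vectors belonging to the `k` smallest `d i`.

For the lower bound put `W = J Y J` and split `Y = a + b` with `a = (Y - W) / 2` and
`b = (Y + W) / 2`, the parts of `Y` which commute and anticommute with `J`. The symplectic
condition says `Yᵀ W = -1`, hence `aᵀ a = 1 + bᵀ b`, while the parallelogram law together with
`Jᵀ (D ⊕ D) J = D ⊕ D` gives `tr (Yᵀ (D ⊕ D) Y) ≥ tr (aᵀ (D ⊕ D) a)`.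
As `aᵀ a ≥ 1`, the matrix `a aᵀ` dominates the orthogonal projection `P = a (aᵀ a)⁻¹ aᵀ` onto the
range of `a`. The diagonal entries of `P` lie in `[0, 1]` and sum to `2k`
(`exists_diag_weights`), and a weighted sum of the `d i` with such weights is at least
`2 (d_1 + ⋯ + d_k)` (`sum_le_weighted_sum`).
-/

open Matrix

lemma symplJ_mul_self (m : ℕ) : symplJ m * symplJ m = -1 := by
  simp [symplJ, Matrix.fromBlocks_multiply, ← Matrix.fromBlocks_one, Matrix.fromBlocks_neg]

lemma symplJ_transpose (m : ℕ) : (symplJ m)ᵀ = -symplJ m := by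
  simp [symplJ, Matrix.fromBlocks_transpose, Matrix.fromBlocks_neg]

/-- If `aᵀ a = 1 + bᵀ b`, the squared norms of the rows of `a` dominate weights in `[0, 1]` whose
sum is the number of columns: the diagonal of the orthogonal projection onto the range of `a`. -/
lemma exists_diag_weights {ι κ : Type*} [Fintype ι] [DecidableEq ι] [Fintype κ] [DecidableEq κ]
    (a b : Matrix ι κ ℝ) (h : aᵀ * a = 1 + bᵀ * b) :
    ∃ p : ι → ℝ, (∀ i, 0 ≤ p i) ∧ (∀ i, p i ≤ 1) ∧ ∑ i, p i = Fintype.card κ ∧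
      ∀ i, p i ≤ (a * aᵀ) i i := by
  set G := aᵀ * a with hG
  have hB : (bᵀ * b).PosSemidef := by
    simpa using Matrix.posSemidef_conjTranspose_mul_self b
  have hGpd : G.PosDef := by
    rw [h]; exact Matrix.PosDef.one.add_posSemidef hB
  have hu : IsUnit G.det := (Matrix.isUnit_iff_isUnit_det _).1 hGpd.isUnit
  have hGt : Gᵀ = G := by simp [hG]
  have hGit : G⁻¹ᵀ = G⁻¹ := by rw [Matrix.transpose_nonsing_inv, hGt]
  set P := a * G⁻¹ * aᵀ with hP
  have hPt : Pᵀ = P := by simp [hP, hGit, Matrix.mul_assoc]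
  have hPP : P * P = P := by
    have : P * P = a * (G⁻¹ * (aᵀ * a) * G⁻¹) * aᵀ := by simp only [hP, Matrix.mul_assoc]
    rw [this, ← hG, Matrix.nonsing_inv_mul _ hu, Matrix.one_mul]
  have hsq : ∀ i, P i i = ∑ j, P i j ^ 2 := by
    intro i
    conv_lhs => rw [← hPP, Matrix.mul_apply]
    refine Finset.sum_congr rfl fun j _ => ?_
    have : P j i = P i j := by
      conv_lhs => rw [← hPt]
      rfl
    rw [this, sq]
  refine ⟨fun i => P i i, fun i => ?_, fun i => ?_, ?_, fun i => ?_⟩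
  · change 0 ≤ P i i
    rw [hsq]; positivity
  · have h1 : P i i ^ 2 ≤ P i i := by
      conv_rhs => rw [hsq]
      exact Finset.single_le_sum (f := fun j => P i j ^ 2) (fun j _ => sq_nonneg _)
        (Finset.mem_univ i)
    nlinarith
  · change P.trace = _
    rw [hP, Matrix.trace_mul_comm, ← Matrix.mul_assoc, ← hG, Matrix.mul_nonsing_inv _ hu,
      Matrix.trace_one]
  · -- `1 - G⁻¹ = G⁻¹ (G² - G) G⁻¹`, and `G² - G = B + B²` is positive semidefinite for `B = bᵀ b`
    have hBB : (bᵀ * b + (bᵀ * b) * (bᵀ * b)).PosSemidef := by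
      refine hB.add ?_
      simpa using Matrix.posSemidef_conjTranspose_mul_self (bᵀ * b)
    have hGG : bᵀ * b + (bᵀ * b) * (bᵀ * b) = G * G - G := by
      rw [h]; noncomm_ring
    have hI : G⁻¹ * (G * G - G) * G⁻¹ = 1 - G⁻¹ := by
      rw [Matrix.mul_sub, Matrix.sub_mul, ← Matrix.mul_assoc, Matrix.nonsing_inv_mul _ hu,
        Matrix.one_mul, Matrix.one_mul, Matrix.mul_nonsing_inv _ hu]
    have h1 : (a * (1 - G⁻¹) * aᵀ).PosSemidef := by
      rw [← hI, ← hGG]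
      have h2 := (hBB.conjTranspose_mul_mul_same G⁻¹).mul_mul_conjTranspose_same a
      simpa only [Matrix.conjTranspose_eq_transpose_of_trivial, hGit] using h2
    have h3 := h1.diag_nonneg (i := i)
    have h4 : a * (1 - G⁻¹) * aᵀ = a * aᵀ - P := by
      rw [Matrix.mul_sub, Matrix.sub_mul, Matrix.mul_one]
    rw [h4, Matrix.sub_apply] at h3
    linarith

lemma sum_castLE_eq {n k : ℕ} (hkn : k ≤ n) (f : Fin n → ℝ) :
    ∑ j : Fin k, f (Fin.castLE hkn j) = ∑ i : Fin n, if (i : ℕ) < k then f i else 0 := by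
  rw [← Finset.sum_filter]
  refine Finset.sum_bij (fun j _ => Fin.castLE hkn j) ?_ ?_ ?_ ?_
  · intro j _; simp
  · intro j _ j' _ hj; simpa using hj
  · intro i hi
    exact ⟨⟨i, (Finset.mem_filter.1 hi).2⟩, Finset.mem_univ _, rfl⟩
  · intro j _; rfl

lemma sum_le_weighted_sum {n k : ℕ} (hk1 : 1 ≤ k) (hkn : k ≤ n) (d : Fin n → ℝ)
    (hd : Monotone d) (q : Fin n → ℝ) (hq0 : ∀ i, 0 ≤ q i) (hq2 : ∀ i, q i ≤ 2)
    (hq : ∑ i, q i = 2 * k) :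
    2 * ∑ j : Fin k, d (Fin.castLE hkn j) ≤ ∑ i, d i * q i := by
  -- compare `q` with the weights `2` on the first `k` indices, after shifting `d` by `c = d_k`
  set c := d ⟨k - 1, by omega⟩ with hc
  have h1 : 0 ≤ ∑ i : Fin n, (d i - c) * (q i - 2 * if (i : ℕ) < k then 1 else 0) := by
    refine Finset.sum_nonneg fun i _ => ?_
    split_ifs with hi
    · have : d i ≤ c := hd (Fin.le_def.2 (by simp; omega))
      nlinarith [hq2 i]
    · have : c ≤ d i := hd (Fin.le_def.2 (by simp; omega))
      nlinarith [hq0 i]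
  have h2 : ∑ i : Fin n, (if (i : ℕ) < k then (1 : ℝ) else 0) = k := by
    rw [← sum_castLE_eq hkn (fun _ => (1 : ℝ))]; simp
  have h3 : ∑ i : Fin n, (d i - c) * (q i - 2 * if (i : ℕ) < k then 1 else 0)
      = ∑ i, d i * q i - 2 * (∑ i : Fin n, if (i : ℕ) < k then d i else 0)
        - c * (∑ i, q i) + c * 2 * ∑ i : Fin n, (if (i : ℕ) < k then (1 : ℝ) else 0) := by
    simp only [Finset.mul_sum, ← Finset.sum_sub_distrib, ← Finset.sum_add_distrib]
    refine Finset.sum_congr rfl fun i _ => ?_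
    split_ifs <;> ring
  rw [h3, hq, h2] at h1
  rw [sum_castLE_eq hkn d]
  linarith

lemma trace_transpose_diagonal {ι κ : Type*} [Fintype ι] [DecidableEq ι] [Fintype κ]
    (e : ι → ℝ) (a : Matrix ι κ ℝ) :
    (aᵀ * Matrix.diagonal e * a).trace = ∑ i, e i * (a * aᵀ) i i := by
  rw [Matrix.trace_mul_comm, ← Matrix.mul_assoc, Matrix.trace_mul_comm]
  simp [Matrix.trace, Matrix.diagonal_mul]

/-- The lower bound for a matrix already in Williamson diagonal form. -/
lemma le_trace_diagonal {n k : ℕ} (hk1 : 1 ≤ k) (hkn : k ≤ n)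
    (d : Fin n → ℝ) (hd0 : ∀ i, 0 ≤ d i) (hdmono : Monotone d)
    (Y : Matrix (Fin n ⊕ Fin n) (Fin k ⊕ Fin k) ℝ) (hY : Yᵀ * symplJ n * Y = symplJ k) :
    2 * ∑ j : Fin k, d (Fin.castLE hkn j) ≤
      (Yᵀ * Matrix.fromBlocks (Matrix.diagonal d) 0 0 (Matrix.diagonal d) * Y).trace := by
  set E : Matrix (Fin n ⊕ Fin n) (Fin n ⊕ Fin n) ℝ :=
    Matrix.fromBlocks (Matrix.diagonal d) 0 0 (Matrix.diagonal d) with hE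
  have hEd : E = Matrix.diagonal (Sum.elim d d) := Matrix.fromBlocks_diagonal d d
  set W := symplJ n * Y * symplJ k with hW
  have hYW : Yᵀ * W = -1 := by
    rw [hW, ← Matrix.mul_assoc, ← Matrix.mul_assoc, hY, symplJ_mul_self]
  have hWY : Wᵀ * Y = -1 := by
    have := congrArg Matrix.transpose hYW
    simpa using this
  set a := (1 / 2 : ℝ) • (Y - W) with ha
  set b := (1 / 2 : ℝ) • (Y + W) with hb
  have hab : aᵀ * a = 1 + bᵀ * b := by
    simp only [ha, hb, Matrix.transpose_smul, Matrix.transpose_sub, Matrix.transpose_add,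
      Matrix.smul_mul, Matrix.mul_smul, Matrix.sub_mul, Matrix.mul_sub, Matrix.add_mul,
      Matrix.mul_add, hYW, hWY]
    module
  have hJEJ : symplJ n * E * symplJ n = -E := by
    simp [symplJ, hE, Matrix.fromBlocks_multiply, Matrix.fromBlocks_neg,
      -Matrix.fromBlocks_diagonal]
  have hWE : (Wᵀ * E * W).trace = (Yᵀ * E * Y).trace := by
    have h1 : Wᵀ * E * W = symplJ k * (Yᵀ * (symplJ n * E * symplJ n) * Y * symplJ k) := by
      simp [hW, symplJ_transpose, Matrix.mul_assoc]
    rw [h1, hJEJ, Matrix.trace_mul_comm, Matrix.mul_assoc _ (symplJ k), symplJ_mul_self]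
    simp
  have hpar : aᵀ * E * a + bᵀ * E * b = (1 / 2 : ℝ) • (Yᵀ * E * Y + Wᵀ * E * W) := by
    simp only [ha, hb, Matrix.transpose_smul, Matrix.transpose_sub, Matrix.transpose_add,
      Matrix.smul_mul, Matrix.mul_smul, Matrix.sub_mul, Matrix.mul_sub, Matrix.add_mul,
      Matrix.mul_add]
    module
  have htr := congrArg Matrix.trace hpar
  rw [Matrix.trace_add, Matrix.trace_smul, Matrix.trace_add, hWE, smul_eq_mul] at htr
  have he0 : ∀ i, 0 ≤ Sum.elim d d i := by rintro (i | i) <;> exact hd0 i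
  have hb0 : 0 ≤ (bᵀ * E * b).trace := by
    rw [hEd, trace_transpose_diagonal]
    refine Finset.sum_nonneg fun i _ => mul_nonneg (he0 i) ?_
    rw [Matrix.mul_apply]
    exact Finset.sum_nonneg fun j _ => mul_self_nonneg (b i j)
  obtain ⟨p, hp0, hp1, hps, hpa⟩ := exists_diag_weights a b hab
  have h1 : ∑ i, Sum.elim d d i * p i ≤ (aᵀ * E * a).trace := by
    rw [hEd, trace_transpose_diagonal]
    exact Finset.sum_le_sum fun i _ => mul_le_mul_of_nonneg_left (hpa i) (he0 i)
  have h2 := sum_le_weighted_sum hk1 hkn d hdmono (fun i => p (Sum.inl i) + p (Sum.inr i))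
    (fun i => add_nonneg (hp0 _) (hp0 _))
    (fun i => by linarith [hp1 (Sum.inl i), hp1 (Sum.inr i)])
    (by
      rw [Fintype.sum_sum_type] at hps
      rw [Finset.sum_add_distrib, hps]
      simp; ring)
  have h3 : ∑ i, d i * (p (Sum.inl i) + p (Sum.inr i)) = ∑ i, Sum.elim d d i * p i := by
    simp [Fintype.sum_sum_type, mul_add, Finset.sum_add_distrib]
  linarith

/-- Trace minimization theorem: if the spsd matrix `A` admits a Williamson diagonal
form with symplectic eigenvalues `0 ≤ d_1 ≤ ⋯ ≤ d_n`, then for `1 ≤ k ≤ n` the value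
`2 (d_1 + ⋯ + d_k)` is the least element of `{tr(Xᵀ A X) : X ∈ Sp(2k, 2n)}`. -/
theorem trace_minimization
    {n k : ℕ} (hk1 : 1 ≤ k) (hkn : k ≤ n)
    (A : Matrix (Fin n ⊕ Fin n) (Fin n ⊕ Fin n) ℝ) (hA : A.PosSemidef)
    (S : Matrix (Fin n ⊕ Fin n) (Fin n ⊕ Fin n) ℝ)
    (hS : Sᵀ * symplJ n * S = symplJ n)
    (d : Fin n → ℝ) (hd0 : ∀ i, 0 ≤ d i) (hdmono : Monotone d)
    (hdiag : Sᵀ * A * S = Matrix.fromBlocks (Matrix.diagonal d) 0 0 (Matrix.diagonal d)) :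
    IsLeast
      {t : ℝ | ∃ X : Matrix (Fin n ⊕ Fin n) (Fin k ⊕ Fin k) ℝ,
        Xᵀ * symplJ n * X = symplJ k ∧ t = (Xᵀ * A * X).trace}
      (2 * ∑ j : Fin k, d (Fin.castLE hkn j)) := by
  have hcongr : ∀ (M : Matrix (Fin n ⊕ Fin n) (Fin n ⊕ Fin n) ℝ)
      (Y : Matrix (Fin n ⊕ Fin n) (Fin k ⊕ Fin k) ℝ),
      (S * Y)ᵀ * M * (S * Y) = Yᵀ * (Sᵀ * M * S) * Y := by
    intro M Y
    simp only [Matrix.transpose_mul, Matrix.mul_assoc]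
  constructor
  · set M : Matrix (Fin n) (Fin k) ℝ :=
      (1 : Matrix (Fin n) (Fin n) ℝ).submatrix id (Fin.castLE hkn) with hM
    have hMD : ∀ e : Fin n → ℝ,
        Mᵀ * (Matrix.diagonal e * M) = Matrix.diagonal (fun j => e (Fin.castLE hkn j)) := by
      intro e
      ext i j
      simp [hM, Matrix.mul_apply, Matrix.one_apply, Matrix.diagonal_apply]
      split_ifs with h <;> simp [h]
    have hMM : Mᵀ * M = 1 := by
      have := hMD 1
      simpa [Matrix.diagonal_one] using this
    refine ⟨S * Matrix.fromBlocks M 0 0 M, ?_, ?_⟩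
    · rw [hcongr, hS]
      simp [symplJ, Matrix.fromBlocks_transpose, Matrix.fromBlocks_multiply, hMM]
    · rw [hcongr, hdiag]
      simp [Matrix.fromBlocks_transpose, Matrix.fromBlocks_multiply, Matrix.mul_assoc, hMD,
        Matrix.trace, Fintype.sum_sum_type, two_mul, -Matrix.fromBlocks_diagonal]
  · rintro t ⟨X, hX, rfl⟩
    have hinv : (-(symplJ n * Sᵀ * symplJ n)) * S = 1 := by
      have : (-(symplJ n * Sᵀ * symplJ n)) * S = -(symplJ n * (Sᵀ * symplJ n * S)) := by
        simp [Matrix.mul_assoc]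
      rw [this, hS, symplJ_mul_self, neg_neg]
    have hinv' := mul_eq_one_comm.1 hinv
    obtain ⟨Y, rfl⟩ : ∃ Y, X = S * Y :=
      ⟨-(symplJ n * Sᵀ * symplJ n) * X, by rw [← Matrix.mul_assoc, hinv', Matrix.one_mul]⟩
    rw [hcongr, hS] at hX
    rw [hcongr, hdiag]
    exact le_trace_diagonal hk1 hkn d hd0 hdmono Y hX
end

section
/- Let A be a 2n×2n real symmetric positive-semidefinite matrix with symplectic matrix S and 0 ≤ d_1 ≤ ⋯ ≤ d_n such that Sᵀ A S = [[D, 0], [0, D]], D = diag(d_1, …, d_n). Then for every k with 1 ≤ k ≤ n and every X ∈ ℝ^{2n×2k} with Xᵀ J_{2n} X = J_{2k}, one has tr(Xᵀ A X) ≥ 2 (d_1 + ⋯ + d_k). -/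
/-!
The substitution `X = S Y` reduces the claim to `A = diag(D, D)`: then `Yᵀ J Y = J` and
`tr (Xᵀ A X) = ∑ i, d i * w i`, where `w i = ‖aᵢ‖² + ‖bᵢ‖²` and `aᵢ`, `bᵢ` are the `i`-th rows
of the upper and the lower half of `Y`.

The main point (`tail_weight_ge`, stated for any set of removed indices) is that the tail weights satisfy
`∑_{i ≥ m} w i ≥ 2 (k - m)` (indices from `0`).
Let `V ⊆ ℝ^{2k}` be the orthogonal complement of the `2m` vectors `aᵢ, bᵢ` with `i < m`, so
`dim V ≥ 2k - 2m`. The relation `Yᵀ J Y = J`, paired with `J v` and `v ∈ V`, reads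
`‖v‖² = ∑_{i ≥ m} (⟪aᵢ, J v⟫ ⟪bᵢ, v⟫ - ⟪bᵢ, J v⟫ ⟪aᵢ, v⟫)`. Summing over an orthonormal basis
of `V`, using `2xy ≤ x² + y²`, and applying Bessel's inequality to `aᵢ, bᵢ` and their rotations by
`Jᵀ` bounds `dim V` by `∑_{i ≥ m} w i`.

Since `d` is monotone and nonnegative, summation by parts (`abel_bound`) turns the tail bounds
into `∑ i, d i * w i ≥ 2 (d_1 + ⋯ + d_k)`.
-/

open Matrix

/-- Multiplication by `Jᵀ` on `ℝ^{2k}` with its Euclidean norm. -/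
noncomputable def rotJ {k : ℕ} (a : EuclideanSpace ℝ (Fin k ⊕ Fin k)) :
    EuclideanSpace ℝ (Fin k ⊕ Fin k) :=
  WithLp.toLp 2 (Sum.elim (fun j => -a (Sum.inr j)) (fun j => a (Sum.inl j)))

lemma norm_sq_rotJ {k : ℕ} (a : EuclideanSpace ℝ (Fin k ⊕ Fin k)) :
    ‖rotJ a‖ ^ 2 = ‖a‖ ^ 2 := by
  simp [EuclideanSpace.real_norm_sq_eq, rotJ, Fintype.sum_sum_type, add_comm]

lemma symplJ_mul_transpose (m : ℕ) : (symplJ m)ᵀ * symplJ m = 1 := by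
  simp [symplJ, Matrix.fromBlocks_multiply, ← Matrix.fromBlocks_one,
    Matrix.fromBlocks_transpose]

/-- The `i`-th row of `Y` as a vector of `ℝ^{2k}` with its Euclidean norm. -/
noncomputable def rowVec {n k : ℕ} (Y : Matrix (Fin n ⊕ Fin n) (Fin k ⊕ Fin k) ℝ)
    (i : Fin n ⊕ Fin n) : EuclideanSpace ℝ (Fin k ⊕ Fin k) :=
  WithLp.toLp 2 (Y i)

lemma inner_rowVec {n k : ℕ} (Y : Matrix (Fin n ⊕ Fin n) (Fin k ⊕ Fin k) ℝ)
    (i : Fin n ⊕ Fin n) (v : EuclideanSpace ℝ (Fin k ⊕ Fin k)) :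
    inner ℝ v (rowVec Y i) = (Y *ᵥ v.ofLp) i := by
  simp [rowVec, PiLp.inner_apply, Matrix.mulVec, dotProduct]

lemma inner_rotJ_rowVec {n k : ℕ} (Y : Matrix (Fin n ⊕ Fin n) (Fin k ⊕ Fin k) ℝ)
    (i : Fin n ⊕ Fin n) (v : EuclideanSpace ℝ (Fin k ⊕ Fin k)) :
    inner ℝ v (rotJ (rowVec Y i)) = (Y *ᵥ (symplJ k *ᵥ v.ofLp)) i := by
  have h : symplJ k *ᵥ v.ofLp
      = Sum.elim (fun j => v (Sum.inr j)) (fun j => -v (Sum.inl j)) := by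
    rw [symplJ, Matrix.fromBlocks_mulVec]
    funext x
    rcases x with x | x <;> simp [Matrix.neg_mulVec]
  rw [h]
  simp [rowVec, rotJ, PiLp.inner_apply, Matrix.mulVec, dotProduct, Fintype.sum_sum_type,
    mul_comm, add_comm]

/-- The relation `Yᵀ J Y = J` evaluated at the pair `(J v, v)`. -/
lemma norm_sq_eq_sum {n k : ℕ} (Y : Matrix (Fin n ⊕ Fin n) (Fin k ⊕ Fin k) ℝ)
    (hY : Yᵀ * symplJ n * Y = symplJ k) (v : EuclideanSpace ℝ (Fin k ⊕ Fin k)) :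
    ‖v‖ ^ 2 = ∑ i : Fin n,
      (inner ℝ v (rotJ (rowVec Y (Sum.inl i))) * inner ℝ v (rowVec Y (Sum.inr i))
        - inner ℝ v (rotJ (rowVec Y (Sum.inr i))) * inner ℝ v (rowVec Y (Sum.inl i))) := by
  simp only [inner_rowVec, inner_rotJ_rowVec]
  have h1 : (symplJ k *ᵥ v.ofLp) ⬝ᵥ (symplJ k *ᵥ v.ofLp) = ‖v‖ ^ 2 := by
    rw [Matrix.dotProduct_mulVec, ← Matrix.mulVec_transpose, Matrix.mulVec_mulVec,
      symplJ_mul_transpose, Matrix.one_mulVec, EuclideanSpace.real_norm_sq_eq]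
    simp [dotProduct, sq]
  have h2 : (symplJ k *ᵥ v.ofLp) ⬝ᵥ (symplJ k *ᵥ v.ofLp)
      = (Y *ᵥ (symplJ k *ᵥ v.ofLp)) ⬝ᵥ (symplJ n *ᵥ (Y *ᵥ v.ofLp)) := by
    conv_lhs =>
      arg 2
      rw [← hY]
    rw [← Matrix.mulVec_mulVec, ← Matrix.mulVec_mulVec, Matrix.dotProduct_mulVec,
      Matrix.vecMul_transpose]
  rw [← h1, h2]
  generalize Y *ᵥ (symplJ k *ᵥ v.ofLp) = p
  generalize Y *ᵥ v.ofLp = q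
  rw [symplJ, Matrix.fromBlocks_mulVec]
  simp [dotProduct, Fintype.sum_sum_type, Matrix.neg_mulVec, Finset.sum_sub_distrib]
  ring

/-- Removing `2 |s|` rows from `Y` leaves squared row norms summing
to at least `2 (k - |s|)`. Applied with `s = {i | i < m}`. -/
lemma tail_weight_ge {n k : ℕ} (Y : Matrix (Fin n ⊕ Fin n) (Fin k ⊕ Fin k) ℝ)
    (hY : Yᵀ * symplJ n * Y = symplJ k) (s : Finset (Fin n)) :
    2 * (k : ℝ) - 2 * (s.card : ℝ) ≤
      ∑ i ∈ sᶜ, (‖rowVec Y (Sum.inl i)‖ ^ 2 + ‖rowVec Y (Sum.inr i)‖ ^ 2) := by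
  classical
  let E := EuclideanSpace ℝ (Fin k ⊕ Fin k)
  let T : Finset E := s.image (fun i => rowVec Y (Sum.inl i)) ∪
    s.image (fun i => rowVec Y (Sum.inr i))
  let U : Submodule ℝ E := Submodule.span ℝ (T : Set E)
  have hU : Module.finrank ℝ U ≤ 2 * s.card := by
    refine (finrank_span_finset_le_card T).trans ((Finset.card_union_le _ _).trans ?_)
    have := Finset.card_image_le (s := s) (f := fun i => rowVec Y (Sum.inl i))
    have := Finset.card_image_le (s := s) (f := fun i => rowVec Y (Sum.inr i))
    omega
  have hdim := U.finrank_add_finrank_orthogonal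
  have hE : Module.finrank ℝ E = 2 * k := by
    simp [E]; ring
  let b := stdOrthonormalBasis ℝ Uᗮ
  let v : Fin (Module.finrank ℝ Uᗮ) → E := fun j => (b j : E)
  have hv : Orthonormal ℝ v := b.orthonormal.comp_linearIsometry Uᗮ.subtypeₗᵢ
  have hperp : ∀ j, ∀ x ∈ T, inner ℝ (v j) x = 0 := fun j x hx =>
    (Submodule.mem_orthogonal' U _).1 (b j).2 x (Submodule.subset_span hx)
  have hbes : ∀ x : E, ∑ j, inner ℝ (v j) x ^ 2 ≤ ‖x‖ ^ 2 := fun x => by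
    simpa using hv.sum_inner_products_le x (s := Finset.univ)
  have hone : ∀ j, (1 : ℝ) ≤ ∑ i ∈ sᶜ,
      (inner ℝ (v j) (rotJ (rowVec Y (Sum.inl i))) ^ 2 + inner ℝ (v j) (rowVec Y (Sum.inr i)) ^ 2
      + inner ℝ (v j) (rotJ (rowVec Y (Sum.inr i))) ^ 2
      + inner ℝ (v j) (rowVec Y (Sum.inl i)) ^ 2) / 2 := by
    intro j
    have h := norm_sq_eq_sum Y hY (v j)
    rw [hv.1 j, ← Finset.sum_add_sum_compl s, Finset.sum_eq_zero (s := s), zero_add] at h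
    · have h' : (1 : ℝ) = 1 ^ 2 := by norm_num
      rw [h', h]
      refine Finset.sum_le_sum fun i _ => ?_
      nlinarith [sq_nonneg (inner ℝ (v j) (rotJ (rowVec Y (Sum.inl i)))
          - inner ℝ (v j) (rowVec Y (Sum.inr i))),
        sq_nonneg (inner ℝ (v j) (rotJ (rowVec Y (Sum.inr i)))
          + inner ℝ (v j) (rowVec Y (Sum.inl i)))]
    · intro i hi
      rw [hperp j (rowVec Y (Sum.inl i))
          (Finset.mem_union_left _ (Finset.mem_image_of_mem _ hi)),
        hperp j (rowVec Y (Sum.inr i))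
          (Finset.mem_union_right _ (Finset.mem_image_of_mem _ hi))]
      ring
  have hsum : (Module.finrank ℝ Uᗮ : ℝ) ≤
      ∑ i ∈ sᶜ, (‖rowVec Y (Sum.inl i)‖ ^ 2 + ‖rowVec Y (Sum.inr i)‖ ^ 2) := by
    have h := Finset.sum_le_sum (s := Finset.univ) fun j _ => hone j
    rw [Finset.sum_comm] at h
    simp only [Finset.sum_const, Finset.card_univ, Fintype.card_fin, nsmul_eq_mul, mul_one] at h
    refine h.trans (Finset.sum_le_sum fun i _ => ?_)
    rw [← Finset.sum_div, Finset.sum_add_distrib, Finset.sum_add_distrib,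
      Finset.sum_add_distrib]
    have h1 := hbes (rotJ (rowVec Y (Sum.inl i)))
    have h2 := hbes (rotJ (rowVec Y (Sum.inr i)))
    have h3 := hbes (rowVec Y (Sum.inl i))
    have h4 := hbes (rowVec Y (Sum.inr i))
    rw [norm_sq_rotJ] at h1 h2
    linarith
  have hcast : (2 * k : ℝ) ≤ 2 * s.card + Module.finrank ℝ Uᗮ := by
    have : 2 * k ≤ 2 * s.card + Module.finrank ℝ Uᗮ := by omega
    exact_mod_cast this
  linarith

/-- Summation by parts: lower bounds on all tail sums of the weights `w` give a lower bound on
their pairing with a nonnegative monotone sequence. -/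
lemma abel_bound {n k : ℕ} (hkn : k ≤ n) (D w : ℕ → ℝ) (hD : Monotone D) (hD0 : 0 ≤ D 0)
    (hw : ∀ i, 0 ≤ w i)
    (ht : ∀ m ≤ k, 2 * (k : ℝ) - 2 * m ≤ ∑ i ∈ Finset.Ico m n, w i) :
    2 * ∑ j ∈ Finset.range k, D j ≤ ∑ i ∈ Finset.range n, D i * w i := by
  -- Downward induction on the start of the tail; the last summand is the excess of tail weight.
  have key : ∀ m ≤ k, 2 * ∑ j ∈ Finset.Ico m k, D j
      + D m * (∑ i ∈ Finset.Ico m n, w i - (2 * k - 2 * m))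
      ≤ ∑ i ∈ Finset.Ico m n, D i * w i := by
    intro m hm
    induction hm using Nat.decreasingInduction with
    | self =>
      simp only [Finset.Ico_self, Finset.sum_empty, mul_zero, zero_add, sub_self, sub_zero]
      rw [Finset.mul_sum]
      exact Finset.sum_le_sum fun i hi =>
        mul_le_mul_of_nonneg_right (hD (Finset.mem_Ico.1 hi).1) (hw i)
    | of_succ m hm ih =>
      rw [Finset.sum_eq_sum_Ico_succ_bot hm, Finset.sum_eq_sum_Ico_succ_bot (hm.trans_le hkn),
        Finset.sum_eq_sum_Ico_succ_bot (hm.trans_le hkn)]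
      have h := ht (m + 1) hm
      push_cast at h ih
      have := mul_le_mul_of_nonneg_right (hD (Nat.le_succ m)) (sub_nonneg.2 h)
      simp only [Nat.succ_eq_add_one] at this
      linarith
  have h := key 0 (Nat.zero_le _)
  have h0 := mul_nonneg hD0 (sub_nonneg.2 (ht 0 (Nat.zero_le _)))
  simp only [Finset.range_eq_Ico]
  linarith

lemma trace_diag {n k : ℕ} (d : Fin n → ℝ) (Y : Matrix (Fin n ⊕ Fin n) (Fin k ⊕ Fin k) ℝ) :
    (Yᵀ * Matrix.fromBlocks (Matrix.diagonal d) 0 0 (Matrix.diagonal d) * Y).trace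
      = ∑ i, d i * (‖rowVec Y (Sum.inl i)‖ ^ 2 + ‖rowVec Y (Sum.inr i)‖ ^ 2) := by
  rw [Matrix.fromBlocks_diagonal, Matrix.trace_mul_comm, ← Matrix.mul_assoc,
    Matrix.trace]
  simp only [Matrix.diag_apply, Matrix.mul_diagonal, Matrix.mul_apply_eq_vecMul]
  rw [Fintype.sum_sum_type, ← Finset.sum_add_distrib]
  refine Finset.sum_congr rfl fun i _ => ?_
  simp only [rowVec, EuclideanSpace.real_norm_sq_eq, Matrix.vecMul, dotProduct,
    Matrix.transpose_apply, Sum.elim_inl, Sum.elim_inr]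
  ring

/-- Lower bound in the trace minimization theorem: if the spsd matrix `A` admits a
Williamson diagonal form with symplectic eigenvalues `0 ≤ d_1 ≤ ⋯ ≤ d_n`, then for
every `X ∈ Sp(2k, 2n)` with `1 ≤ k ≤ n`, `tr(Xᵀ A X) ≥ 2 (d_1 + ⋯ + d_k)`. -/
theorem trace_lower_bound
    {n k : ℕ} (hk1 : 1 ≤ k) (hkn : k ≤ n)
    (A : Matrix (Fin n ⊕ Fin n) (Fin n ⊕ Fin n) ℝ) (hA : A.PosSemidef)
    (S : Matrix (Fin n ⊕ Fin n) (Fin n ⊕ Fin n) ℝ)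
    (hS : Sᵀ * symplJ n * S = symplJ n)
    (d : Fin n → ℝ) (hd0 : ∀ i, 0 ≤ d i) (hdmono : Monotone d)
    (hdiag : Sᵀ * A * S = Matrix.fromBlocks (Matrix.diagonal d) 0 0 (Matrix.diagonal d))
    (X : Matrix (Fin n ⊕ Fin n) (Fin k ⊕ Fin k) ℝ)
    (hX : Xᵀ * symplJ n * X = symplJ k) :
    2 * ∑ j : Fin k, d (Fin.castLE hkn j) ≤ (Xᵀ * A * X).trace := by
  have hinv : (-(symplJ n * Sᵀ * symplJ n)) * S = 1 := by
    rw [Matrix.neg_mul, Matrix.mul_assoc, Matrix.mul_assoc, ← Matrix.mul_assoc Sᵀ, hS,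
      symplJ_mul_self, neg_neg]
  have hinv' := mul_eq_one_comm.1 hinv
  obtain ⟨Y, rfl⟩ : ∃ Y, X = S * Y :=
    ⟨-(symplJ n * Sᵀ * symplJ n) * X, by rw [← Matrix.mul_assoc, hinv', Matrix.one_mul]⟩
  have conj : ∀ M, (S * Y)ᵀ * M * (S * Y) = Yᵀ * (Sᵀ * M * S) * Y := fun M => by
    simp only [Matrix.transpose_mul, Matrix.mul_assoc]
  rw [conj, hS] at hX
  rw [conj, hdiag, trace_diag]
  have hn : 0 < n := by omega
  -- `d` and the weights extended to `ℕ`: `d` by its last value (keeping it monotone), `w` by `0`.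
  let D : ℕ → ℝ := fun i => d ⟨min i (n - 1), by omega⟩
  let w : ℕ → ℝ := fun i => if h : i < n then
    ‖rowVec Y (Sum.inl ⟨i, h⟩)‖ ^ 2 + ‖rowVec Y (Sum.inr ⟨i, h⟩)‖ ^ 2 else 0
  have hDi : ∀ i : Fin n, D i = d i := fun i => by
    simp only [D]; congr 1; ext; simp only; omega
  have hwi : ∀ i : Fin n,
      w i = ‖rowVec Y (Sum.inl i)‖ ^ 2 + ‖rowVec Y (Sum.inr i)‖ ^ 2 := fun i => by
    simp [w]
  have h := abel_bound hkn D w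
    (fun i j hij => hdmono (by simp only [Fin.mk_le_mk]; omega)) (hd0 _)
    (fun i => by simp only [w]; split_ifs <;> positivity) ?_
  · rw [← Fin.sum_univ_eq_sum_range, ← Fin.sum_univ_eq_sum_range (fun i => D i * w i)] at h
    simp only [hDi, hwi] at h
    convert h using 3 with j
    exact (hDi (Fin.castLE hkn j)).symm
  · intro m hm
    have ht := tail_weight_ge Y hX (Finset.univ.filter fun i : Fin n => (i : ℕ) < m)
    have hc : (Finset.univ.filter fun i : Fin n => (i : ℕ) < m).card = m := by
      rw [Fin.card_filter_val_lt]; omega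
    rw [hc] at ht
    refine ht.trans (le_of_eq ?_)
    simp only [← hwi]
    rw [Finset.compl_filter, Finset.sum_filter,
      Fin.sum_univ_eq_sum_range (fun i => if ¬ i < m then w i else 0), ← Finset.sum_filter]
    congr 1
    ext i
    simp only [Finset.mem_filter, Finset.mem_range, Finset.mem_Ico]
    omega
end
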